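/- arXiv:1302.0806 — 2 statements merged into one kernel-verified Lean document; each statement's English description precedes it below -/
import Mathlib

section
/- Let m ≥ 1, let R be an m×m upper triangular complex matrix, and let I ⊆ {1,…,m} be any subset. Then det(R_Iᴴ R_I) ≥ ∏_{i∈I} |r_{ii}|², where R_I denotes the m×|I| submatrix of R formed by the columns with indices in I, and r_{ii} is the i-th diagonal entry of R. -/
open Matrix BigOperators
open scoped ComplexOrder

lemma one_le_det_one_add {n : Type*} [Fintype n] [DecidableEq n] (P : Matrix n n ℂ)
    (hP : P.PosSemidef) : 1 ≤ (1 + P).det.re := by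
  have hA : (1 + P).IsHermitian := Matrix.isHermitian_one.add hP.1
  have h1 : ∀ i, 1 ≤ hA.eigenvalues i := by
    intro i
    rw [hA.eigenvalues_eq, Matrix.add_mulVec, dotProduct_add, Matrix.one_mulVec, map_add]
    have h2 := hP.re_dotProduct_nonneg (⇑(hA.eigenvectorBasis i))
    have h3 : inner ℂ (hA.eigenvectorBasis i) (hA.eigenvectorBasis i) = (1:ℂ) := by
      rw [inner_self_eq_norm_sq_to_K, hA.eigenvectorBasis.orthonormal.1 i]; simp
    rw [EuclideanSpace.inner_eq_star_dotProduct, dotProduct_comm] at h3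
    rw [h3]
    simpa using h2
  rw [hA.det_eq_prod_eigenvalues]
  have : (∏ i, ((hA.eigenvalues i : ℝ) : ℂ)) = ((∏ i, hA.eigenvalues i : ℝ) : ℂ) := by
    push_cast; rfl
  erw [this]
  rw [Complex.ofReal_re]
  calc (1:ℝ) = ∏ _i : n, (1:ℝ) := by simp
    _ ≤ _ := Finset.prod_le_prod (fun _ _ => zero_le_one) fun i _ => h1 i

/-- key step in Lemma 3 of the paper.
Let `m ≥ 1`, `R` an `m × m` upper triangular complex matrix, and `I` any subset
of the column indices.  Then the Gram determinant of the submatrix `R_I` of the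
columns of `R` indexed by `I` satisfies `det(R_Iᴴ R_I) ≥ ∏_{i ∈ I} |r_{ii}|²`
(the Gram determinant being a nonnegative real, we state the bound on its real
part). -/
theorem stmt2 (m : ℕ) (hm : 1 ≤ m) (R : Matrix (Fin m) (Fin m) ℂ)
    (hR : R.BlockTriangular (id : Fin m → Fin m)) (I : Finset (Fin m)) :
    ∏ i ∈ I, ‖R i i‖ ^ 2 ≤
      (((R.submatrix id (fun i : {x // x ∈ I} => i.1))ᴴ *
        (R.submatrix id (fun i : {x // x ∈ I} => i.1))).det).re := by
  set B := R.submatrix id (fun i : {x // x ∈ I} => i.1) with hB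
  set T : Matrix {x // x ∈ I} {x // x ∈ I} ℂ := R.submatrix (fun i => i.1) (fun i => i.1) with hT
  set S : Matrix {x // x ∉ I} {x // x ∈ I} ℂ := R.submatrix (fun i => i.1) (fun i => i.1) with hS
  have hdetT : T.det = ∏ i ∈ I, R i i := by
    have : T.BlockTriangular id := fun i j hij => hR (i := i.1) (j := j.1) hij
    rw [Matrix.det_of_isUpperTriangular this, ← Finset.prod_coe_sort I (fun i => R i i)]
    rfl
  have hsplit : Bᴴ * B = Tᴴ * T + Sᴴ * S := by
    ext i j
    simp only [Matrix.add_apply, Matrix.mul_apply, Matrix.conjTranspose_apply, hB, hT, hS,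
      Matrix.submatrix_apply, id]
    convert (Fintype.sum_subtype_add_sum_subtype (fun x => x ∈ I)
      (fun x => star (R x i) * R x j)).symm
  have hprod : ∏ i ∈ I, ‖R i i‖ ^ 2 = ‖T.det‖ ^ 2 := by
    rw [hdetT, norm_prod, Finset.prod_pow]
  rw [hprod]
  by_cases h0 : T.det = 0
  · rw [h0]
    have := (Matrix.posSemidef_conjTranspose_mul_self B).det_nonneg
    simpa using (Complex.le_def.1 this).1
  · have hu : IsUnit T.det := isUnit_iff_ne_zero.2 h0
    have hfac : Tᴴ * T + Sᴴ * S = Tᴴ * (1 + (S * T⁻¹)ᴴ * (S * T⁻¹)) * T := by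
      have e : S * T⁻¹ * T = S := by
        rw [Matrix.mul_assoc, Matrix.nonsing_inv_mul _ hu, Matrix.mul_one]
      have e2 : Tᴴ * (S * T⁻¹)ᴴ = Sᴴ := by
        rw [← Matrix.conjTranspose_mul, e]
      rw [Matrix.mul_add, Matrix.add_mul, Matrix.mul_one, ← Matrix.mul_assoc Tᴴ, e2,
        Matrix.mul_assoc Sᴴ, e]
    have h1 := one_le_det_one_add _ (Matrix.posSemidef_conjTranspose_mul_self (S * T⁻¹))
    rw [hsplit, hfac, Matrix.det_mul, Matrix.det_mul, Matrix.det_conjTranspose]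
    have : ∀ z d : ℂ, star z * d * z = ((‖z‖ ^ 2 : ℝ) : ℂ) * d := by
      intro z d
      rw [← Complex.normSq_eq_norm_sq, Complex.normSq_eq_conj_mul_self]
      simp only [starRingEnd_apply]; ring
    rw [this, Complex.re_ofReal_mul]
    nlinarith [sq_nonneg ‖T.det‖]
end

section
/- Let m, M ≥ 1, let H be an m×M complex matrix, let c > 0, and let Ψ be an M×M Hermitian complex matrix whose eigenvalues λ_1 ≥ λ_2 ≥ … ≥ λ_M satisfy λ_M ≥ c. Set m' = min(m, M). Then the positive real number det(I_m + H Ψ Hᴴ) satisfies det(I_m + H Ψ Hᴴ) ≤ ( ∏_{i=1}^{m'} λ_i ) · ( c^{−1} + ‖H‖_F² )^{m'}, where ‖H‖_F is the Frobenius norm of H. -/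
open Matrix BigOperators

section aux

open scoped ComplexOrder MatrixOrder

theorem aux_spec {n : Type*} [Fintype n] [DecidableEq n] {P : Matrix n n ℂ} (hP : P.IsHermitian) :
    ∃ U : Matrix n n ℂ, U * Uᴴ = 1 ∧ Uᴴ * U = 1 ∧
      P = U * diagonal (fun i => ((hP.eigenvalues i : ℝ) : ℂ)) * Uᴴ := by
  refine ⟨hP.eigenvectorUnitary, ?_, ?_, ?_⟩
  · exact Unitary.coe_mul_star_self hP.eigenvectorUnitary
  · exact Unitary.coe_star_mul_self hP.eigenvectorUnitary
  · conv_lhs => rw [hP.spectral_theorem, Unitary.conjStarAlgAut_apply]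
    rfl

theorem aux_one_le {n : Type*} [Fintype n] [DecidableEq n] {P : Matrix n n ℂ}
    (hP : P.PosSemidef) : 1 ≤ (1 + P).det := by
  obtain ⟨U, h1, h2, h3⟩ := aux_spec hP.1
  have h4 : 1 + P = U * diagonal (fun i => ((1 + hP.1.eigenvalues i : ℝ) : ℂ)) * Uᴴ := by
    have : diagonal (fun i => ((1 + hP.1.eigenvalues i : ℝ) : ℂ)) =
      1 + diagonal (fun i => ((hP.1.eigenvalues i : ℝ) : ℂ)) := by
      rw [← diagonal_one, diagonal_add]; simp
    rw [this, mul_add, add_mul, ← h3, mul_one, h1]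
  rw [h4, det_mul_right_comm, h1, one_mul, det_diagonal, ← Complex.ofReal_prod]
  have : (1 : ℝ) ≤ ∏ i, (1 + hP.1.eigenvalues i) :=
    Finset.prod_induction _ (fun x : ℝ => 1 ≤ x) (fun _ _ => one_le_mul_of_one_le_of_one_le) le_rfl
      fun i _ => by have := hP.eigenvalues_nonneg i; linarith
  exact_mod_cast this

theorem aux_trace {n : Type*} [Fintype n] [DecidableEq n] {P : Matrix n n ℂ}
    (hP : P.PosSemidef) : (P.trace • (1 : Matrix n n ℂ) - P).PosSemidef := by
  obtain ⟨U, h1, h2, h3⟩ := aux_spec hP.1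
  have h4 : P.trace • (1 : Matrix n n ℂ) - P =
      U * diagonal (fun i => ((∑ j, hP.1.eigenvalues j - hP.1.eigenvalues i : ℝ) : ℂ)) * Uᴴ := by
    have : diagonal (fun i => ((∑ j, hP.1.eigenvalues j - hP.1.eigenvalues i : ℝ) : ℂ)) =
      P.trace • (1 : Matrix n n ℂ) - diagonal (fun i => ((hP.1.eigenvalues i : ℝ) : ℂ)) := by
      rw [hP.1.trace_eq_sum_eigenvalues, smul_one_eq_diagonal, diagonal_sub]; simp
    rw [this, mul_sub, sub_mul, ← h3]
    simp [h1]
  rw [h4]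
  apply PosSemidef.mul_mul_conjTranspose_same
  rw [posSemidef_diagonal_iff]
  intro i
  have := Finset.single_le_sum (fun j _ => hP.eigenvalues_nonneg j) (Finset.mem_univ i)
  exact_mod_cast sub_nonneg.2 this

theorem aux_mono {n : Type*} [Fintype n] [DecidableEq n] {A B : Matrix n n ℂ}
    (hA : A.PosDef) (hB : (B - A).PosSemidef) : A.det ≤ B.det := by
  obtain ⟨C, hC⟩ := CStarAlgebra.nonneg_iff_eq_star_mul_self.1 (nonneg_iff_posSemidef.2 hB)
  rw [star_eq_conjTranspose] at hC
  have hu : IsUnit A.det := (isUnit_iff_isUnit_det A).1 hA.isUnit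
  have : B = A * (1 + A⁻¹ * Cᴴ * C) := by
    rw [mul_add, Matrix.mul_assoc A⁻¹, Matrix.mul_nonsing_inv_cancel_left _ _ hu, ← hC]; simp
  rw [this, det_mul, det_one_add_mul_comm, ← Matrix.mul_assoc]
  exact le_mul_of_one_le_right hA.det_pos.le
    (aux_one_le (hA.inv.posSemidef.mul_mul_conjTranspose_same C))

theorem aux_main {m n : Type*} [Fintype m] [DecidableEq m] [Fintype n] [DecidableEq n]
    (H : Matrix m n ℂ) (d : n → ℝ) (hd : ∀ i, 0 ≤ d i) (s : ℝ) (hs : (H * Hᴴ).trace = s)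
    (hs0 : 0 ≤ s) (t : ℝ) (ht : 0 ≤ t) :
    (1 + H * diagonal (fun i => (d i : ℂ)) * Hᴴ).det ≤
      (((1 + t * s) ^ Fintype.card m * ∏ i, (1 + s * (max (d i - t) 0) / (1 + t * s)) : ℝ) : ℂ) := by
  set e : n → ℝ := fun i => max (d i - t) 0 with he
  have he0 : ∀ i, 0 ≤ e i := fun i => le_max_right _ _
  have hb : 0 < 1 + t * s := by positivity
  set b := 1 + t * s with hbd
  have hsT : (Hᴴ * H).trace = s := by rw [trace_mul_comm, hs]
  have k1 := aux_trace (posSemidef_self_mul_conjTranspose H)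
  have k2 := aux_trace (posSemidef_conjTranspose_mul_self H)
  rw [hs] at k1
  rw [hsT] at k2
  have step1 : (1 + H * diagonal (fun i => (d i : ℂ)) * Hᴴ).det ≤
      ((b : ℂ) • (1 : Matrix m m ℂ) + H * diagonal (fun i => (e i : ℂ)) * Hᴴ).det := by
    apply aux_mono
    · refine PosDef.one.add_posSemidef (PosSemidef.mul_mul_conjTranspose_same ?_ _)
      rw [posSemidef_diagonal_iff]
      intro i; exact_mod_cast hd i
    · have : (b : ℂ) • (1 : Matrix m m ℂ) + H * diagonal (fun i => (e i : ℂ)) * Hᴴ -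
          (1 + H * diagonal (fun i => (d i : ℂ)) * Hᴴ) =
          (t : ℂ) • ((s : ℂ) • (1 : Matrix m m ℂ) - H * Hᴴ) +
          H * diagonal (fun i => ((e i + t - d i : ℝ) : ℂ)) * Hᴴ := by
        have : diagonal (fun i => ((e i + t - d i : ℝ) : ℂ)) = diagonal (fun i => (e i : ℂ))
            + (t : ℂ) • (1 : Matrix n n ℂ) - diagonal (fun i => (d i : ℂ)) := by
          rw [smul_one_eq_diagonal, diagonal_add, diagonal_sub]; simp
        rw [this, hbd]
        simp only [Matrix.mul_add, Matrix.add_mul, Matrix.mul_sub, Matrix.sub_mul, smul_sub, Matrix.mul_smul, Matrix.smul_mul,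
          Matrix.mul_one]
        push_cast
        rw [add_smul, smul_smul, one_smul]
        abel
      rw [this]
      refine (k1.smul (by exact_mod_cast ht)).add (PosSemidef.mul_mul_conjTranspose_same ?_ _)
      rw [posSemidef_diagonal_iff]
      intro i
      have : 0 ≤ e i + t - d i := by have := le_max_left (d i - t) 0; simp only [he]; linarith
      exact_mod_cast this
  refine step1.trans ?_
  set R : Matrix n n ℂ := diagonal (fun i => ((√(e i / b) : ℝ) : ℂ)) with hR
  have hRH : Rᴴ = R := by
    rw [hR, diagonal_conjTranspose]; congr 1; ext i; simp
  have hRR : (b : ℂ) • (R * R) = diagonal (fun i => (e i : ℂ)) := by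
    rw [hR, diagonal_mul_diagonal, ← diagonal_smul]
    congr 1; ext i
    simp only [Pi.smul_apply, smul_eq_mul]
    rw [← Complex.ofReal_mul, Real.mul_self_sqrt (div_nonneg (he0 i) hb.le), ← Complex.ofReal_mul]
    congr 1; field_simp
  have e1 : (b : ℂ) • (1 : Matrix m m ℂ) + H * diagonal (fun i => (e i : ℂ)) * Hᴴ =
      (b : ℂ) • (1 + (H * R) * (R * Hᴴ)) := by
    rw [← hRR, smul_add]; simp [Matrix.mul_assoc]
  rw [e1, det_smul, det_one_add_mul_comm, Complex.ofReal_mul, Complex.ofReal_pow]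
  refine mul_le_mul_of_nonneg_left ?_ (by exact_mod_cast (pow_pos hb _).le)
  have e2 : ((∏ i, (1 + s * e i / b) : ℝ) : ℂ) =
      (1 + (s : ℂ) • (R * R)).det := by
    rw [hR, diagonal_mul_diagonal, ← diagonal_smul, ← diagonal_one, diagonal_add, det_diagonal,
      Complex.ofReal_prod]
    refine Finset.prod_congr rfl fun i _ => ?_
    simp only [Pi.smul_apply, smul_eq_mul]
    rw [← Complex.ofReal_mul, Real.mul_self_sqrt (div_nonneg (he0 i) hb.le)]
    push_cast; ring
  rw [e2]
  apply aux_mono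
  · refine PosDef.one.add_posSemidef ?_
    have := (posSemidef_self_mul_conjTranspose (R * Hᴴ))
    rwa [conjTranspose_mul, conjTranspose_conjTranspose, hRH] at this
  · have := k2.mul_mul_conjTranspose_same R
    rw [hRH] at this
    convert this using 1
    simp only [mul_sub, sub_mul, Matrix.mul_smul, Matrix.smul_mul, Matrix.mul_one,
      Matrix.mul_assoc]
    abel

end aux

/-- upper-bound chain (tmp47)–(tmp42) in the proof of
Proposition 1 of the paper.  Let `H` be an `m × M` complex matrix, `c > 0`,
and `Ψ` an `M × M` Hermitian matrix whose eigenvalues `lam` (listed in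
decreasing order) satisfy `lam_M ≥ c`.  With `m' = min m M`:
`det(I_m + H Ψ Hᴴ) ≤ (∏_{i=1}^{m'} lam_i) ⬝ (c⁻¹ + ‖H‖_F²)^{m'}`,
where `‖H‖_F² = Σ_{i,j} |H i j|²` is the squared Frobenius norm (the
determinant being a positive real, we state the bound on its real part). -/
theorem stmt9 (m M : ℕ) (hm : 1 ≤ m) (hM : 1 ≤ M)
    (H : Matrix (Fin m) (Fin M) ℂ) (c : ℝ) (hc : 0 < c)
    (Ψ : Matrix (Fin M) (Fin M) ℂ) (hΨ : Ψ.IsHermitian)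
    (lam : Fin M → ℝ) (hanti : Antitone lam) (g : Equiv.Perm (Fin M))
    (hlam : ∀ i, lam i = hΨ.eigenvalues (g i))
    (hmin : c ≤ lam ⟨M - 1, by omega⟩) :
    ((1 : Matrix (Fin m) (Fin m) ℂ) + H * Ψ * Hᴴ).det.re ≤
      (∏ i : Fin (min m M), lam (Fin.castLE (Nat.min_le_right m M) i)) *
        (c⁻¹ + ∑ i : Fin m, ∑ j : Fin M, ‖H i j‖ ^ 2) ^ (min m M) := by
  obtain ⟨U, h1, h2, h3⟩ := aux_spec hΨ
  have hlc : ∀ i, c ≤ lam i := fun i => hmin.trans (hanti (Fin.le_def.2 (by simp; omega)))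
  set s : ℝ := ∑ i : Fin m, ∑ j : Fin M, ‖H i j‖ ^ 2 with hs
  have hs0 : 0 ≤ s := by positivity
  have htr : ((H * U) * (H * U)ᴴ).trace = (s : ℂ) := by
    rw [conjTranspose_mul, Matrix.mul_assoc, ← Matrix.mul_assoc U, h1, Matrix.one_mul, hs]
    simp only [trace, diag, mul_apply, conjTranspose_apply]
    push_cast
    refine Finset.sum_congr rfl fun i _ => Finset.sum_congr rfl fun j _ => ?_
    exact Complex.mul_conj' _
  have hev : ∀ i, 0 ≤ hΨ.eigenvalues i := fun i => by
    have := hlc (g.symm i); rw [hlam] at this; simp at this; linarith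
  have hre : H * Ψ * Hᴴ = (H * U) * diagonal (fun i => ((hΨ.eigenvalues i : ℝ) : ℂ)) * (H * U)ᴴ := by
    conv_lhs => rw [h3]
    simp only [conjTranspose_mul, Matrix.mul_assoc]
  have key : ∀ t : ℝ, 0 ≤ t → (1 + H * Ψ * Hᴴ).det.re ≤
      (1 + t * s) ^ m * ∏ i, (1 + s * (max (lam i - t) 0) / (1 + t * s)) := by
    intro t ht
    have := (Complex.le_def.1 (aux_main (H * U) _ hev s htr hs0 t ht)).1
    rw [Complex.ofReal_re, ← hre, Fintype.card_fin] at this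
    refine this.trans (le_of_eq ?_)
    congr 1
    simp only [hlam]
    exact (Equiv.prod_comp g (fun i => 1 + s * max (hΨ.eigenvalues i - t) 0 / (1 + t * s))).symm
  have fin : (1 + H * Ψ * Hᴴ).det.re ≤
      ∏ i : Fin (min m M), (1 + s * lam (Fin.castLE (Nat.min_le_right m M) i)) := by
    rcases le_total M m with h | h
    · refine (key 0 le_rfl).trans (le_of_eq ?_)
      have hmm : min m M = M := min_eq_right h
      simp only [zero_mul, add_zero, one_pow, one_mul, sub_zero, div_one]
      symm
      apply Fintype.prod_equiv (finCongr hmm)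
      intro i
      rw [max_eq_left (hc.le.trans (hlc _))]
      rfl
    · have hmm : min m M = m := min_eq_left h
      set t := lam ⟨m - 1, by omega⟩ with htd
      have ht : 0 ≤ t := hc.le.trans (hlc _)
      have hb : 0 < 1 + t * s := by positivity
      refine (key t ht).trans (le_of_eq ?_)
      have e1 : ∏ i, (1 + s * (max (lam i - t) 0) / (1 + t * s)) =
          ∏ i : Fin m, (1 + s * lam (Fin.castLE h i)) / (1 + t * s) := by
        obtain ⟨k, rfl⟩ := Nat.exists_eq_add_of_le h
        rw [Fin.prod_univ_add]
        rw [Finset.prod_eq_one (s := Finset.univ (α := Fin k)), mul_one]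
        · refine Finset.prod_congr rfl fun i _ => ?_
          have : t ≤ lam (Fin.castAdd k i) := hanti (Fin.le_def.2 (by simp; omega))
          rw [max_eq_left (by linarith)]
          change _ = (1 + s * lam (Fin.castAdd k i)) / (1 + t * s)
          field_simp
          ring
        · intro i _
          have : lam (Fin.natAdd m i) ≤ t := hanti (Fin.le_def.2 (by simp; omega))
          rw [max_eq_right (by linarith)]
          simp
      rw [e1, Finset.prod_div_distrib, Finset.prod_const, Finset.card_univ, Fintype.card_fin,
        mul_div_cancel₀ _ (pow_pos hb _).ne']
      symm
      apply Fintype.prod_equiv (finCongr hmm)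
      intro i
      rfl
  refine fin.trans ?_
  have : (c⁻¹ + s) ^ (min m M) = ∏ i : Fin (min m M), (c⁻¹ + s) := by simp
  rw [this, ← Finset.prod_mul_distrib]
  refine Finset.prod_le_prod (fun i _ => ?_) (fun i _ => ?_)
  · have := hc.le.trans (hlc (Fin.castLE (Nat.min_le_right m M) i))
    positivity
  · have := hlc (Fin.castLE (Nat.min_le_right m M) i)
    have h5 : 1 ≤ lam (Fin.castLE (Nat.min_le_right m M) i) * c⁻¹ := by
      rw [← div_eq_mul_inv, one_le_div hc]; exact this
    linarith [mul_add (lam (Fin.castLE (Nat.min_le_right m M) i)) c⁻¹ s,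
      mul_comm s (lam (Fin.castLE (Nat.min_le_right m M) i))]
end
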